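/- Let F be a field, f, g ∈ F[x₁,…,xₙ] with deg f = d, where char F = 0 or char F > d. Suppose a ∈ Fⁿ satisfies f(x+a) = g(x). Then for b ∈ Fⁿ, the identity f(x+b) = g(x) holds if and only if the first-order directional derivatives of f in directions a and b coincide: f^{(1)}(a,x) = f^{(1)}(b,x). -/

import Mathlib

/-!
Put `c = b - a`. Since shifts compose additively and `dirDeriv · 1 f` is linear in the direction,
the claim reduces to: `f(x + c) = f(x)` iff the derivative of `f` along `c` vanishes.

Consider `P(t) = f(x + t c)` as a univariate polynomial in `t` over `F[x₁, …, xₙ]`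
(`linePoly`). It has degree at most `d`, and by the chain rule `P'(t) = (D_c f)(x + t c)`
(`derivative_linePoly`).

* If `f(x + c) = f(x)`, then `P(k) = f(x)` for every natural number `k`. The elements `0, …, d` are
  distinct because the characteristic is `0` or exceeds `d`, so `P` is constant, and
  `D_c f = P'(0) = 0`.
* If `D_c f = 0`, then `P' = 0`. Since `1, …, d` are nonzero in `F` and `deg P ≤ d`, `P` is
  constant, whence `f(x + c) = P(1) = P(0) = f(x)`.
-/

open MvPolynomial

/-- Shift of a multivariate polynomial: `shift a f = f(x + a)`. -/
noncomputable def shift {F : Type*} [CommRing F] {n : ℕ} (a : Fin n → F)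
    (f : MvPolynomial (Fin n) F) : MvPolynomial (Fin n) F :=
  aeval (fun i => X i + C (a i)) f

/-- Iterated partial derivative `∂^r f / (∂x_{e 1} ⋯ ∂x_{e r})`. -/
noncomputable def pderivMulti {F : Type*} [CommRing F] {n r : ℕ} (e : Fin r → Fin n)
    (f : MvPolynomial (Fin n) F) : MvPolynomial (Fin n) F :=
  (List.ofFn e).foldl (fun p i => pderiv i p) f

/-- Order-`r` directional derivative of `f` in direction `a`:
`∑_{e ∈ [n]^r} (∏_k a_{e k}) • ∂^r f/(∂x_{e 1} ⋯ ∂x_{e r})`. -/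
noncomputable def dirDeriv {F : Type*} [CommRing F] {n : ℕ} (a : Fin n → F) (r : ℕ)
    (f : MvPolynomial (Fin n) F) : MvPolynomial (Fin n) F :=
  ∑ e : Fin r → Fin n, (∏ k, a (e k)) • pderivMulti e f

theorem dirDeriv_one {F : Type*} [CommRing F] {n : ℕ} (a : Fin n → F)
    (f : MvPolynomial (Fin n) F) : dirDeriv a 1 f = ∑ i, a i • pderiv i f := by
  unfold dirDeriv
  rw [← (Equiv.funUnique (Fin 1) (Fin n)).symm.sum_comp]
  refine Finset.sum_congr rfl fun i _ => ?_
  simp [pderivMulti]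

theorem dirDeriv_one_sub {F : Type*} [CommRing F] {n : ℕ} (a b : Fin n → F)
    (f : MvPolynomial (Fin n) F) :
    dirDeriv (b - a) 1 f = dirDeriv b 1 f - dirDeriv a 1 f := by
  simp [dirDeriv_one, sub_smul, Finset.sum_sub_distrib]

theorem shift_shift {F : Type*} [CommRing F] {n : ℕ} (a b : Fin n → F)
    (f : MvPolynomial (Fin n) F) : shift a (shift b f) = shift (a + b) f := by
  unfold shift
  rw [← AlgHom.comp_apply]
  congr 1
  ext1 i
  simp [add_assoc]

theorem shift_zero {F : Type*} [CommRing F] {n : ℕ}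
    (f : MvPolynomial (Fin n) F) : shift 0 f = f := by
  simp [shift]

/-- The restriction of `f` to the generic line in direction `c`: the polynomial `f(x + t c)` in the
variable `t`, with coefficients in `F[x₁, …, xₙ]`. -/
noncomputable def linePoly {F : Type*} [CommRing F] {n : ℕ} (c : Fin n → F)
    (f : MvPolynomial (Fin n) F) : Polynomial (MvPolynomial (Fin n) F) :=
  aeval (fun i => Polynomial.C (X i) + Polynomial.C (C (c i)) * Polynomial.X) f

theorem eval_linePoly {F : Type*} [CommRing F] {n : ℕ} (c : Fin n → F)
    (f : MvPolynomial (Fin n) F) (k : ℕ) :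
    (linePoly c f).eval (k : MvPolynomial (Fin n) F) = shift (k • c) f := by
  unfold linePoly shift
  induction f using MvPolynomial.induction_on with
  | C r => simp [Polynomial.algebraMap_apply]
  | add p q hp hq => simp [hp, hq]
  | mul_X p i hp =>
    rw [map_mul, map_mul, Polynomial.eval_mul, hp]
    simp [mul_comm (C (c i))]

theorem natDegree_linePoly_le {F : Type*} [CommRing F] {n : ℕ} (c : Fin n → F)
    (f : MvPolynomial (Fin n) F) : (linePoly c f).natDegree ≤ f.totalDegree := by
  -- `aeval_natDegree_le` needs `f` and the values to have the same coefficient ring.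
  have h : linePoly c f = aeval (fun i => Polynomial.C (X i) + Polynomial.C (C (c i)) *
      Polynomial.X) (map (C : F →+* MvPolynomial (Fin n) F) f) := by
    rw [linePoly, ← algebraMap_eq, aeval_map_algebraMap]
  rw [h]
  have := aeval_natDegree_le (map (C : F →+* MvPolynomial (Fin n) F) f)
    (m := f.totalDegree) (Finset.sup_mono (support_map_subset _ _))
    (fun i => Polynomial.C (X i) + Polynomial.C (C (c i)) * Polynomial.X) (n := 1)
    (fun i => by compute_degree)
  simpa using this

/-- Chain rule along a line: `d/dt f(x + t c) = (D_c f)(x + t c)`. -/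
theorem derivative_linePoly {F : Type*} [CommRing F] {n : ℕ} (c : Fin n → F)
    (f : MvPolynomial (Fin n) F) :
    Polynomial.derivative (linePoly c f) = linePoly c (dirDeriv c 1 f) := by
  rw [dirDeriv_one]
  unfold linePoly
  induction f using MvPolynomial.induction_on with
  | C r => simp [Polynomial.algebraMap_apply]
  | add p q hp hq => simp [hp, hq, Finset.sum_add_distrib]
  | mul_X p i hp =>
    have h : ∑ j, c j • pderiv j (p * X i) = (∑ j, c j • pderiv j p) * X i + c i • p := by
      simp [pderiv_X, Pi.single_apply, Finset.sum_add_distrib, Finset.mul_sum, mul_comm, add_comm]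
    have hc : c i • p = C (c i) * p := Algebra.smul_def _ _
    rw [h, hc, map_mul, Polynomial.derivative_mul, hp, map_add, map_mul, map_mul]
    simp only [aeval_X, aeval_C, Polynomial.derivative_add, Polynomial.derivative_mul,
      Polynomial.derivative_C, Polynomial.derivative_X, Polynomial.algebraMap_apply, algebraMap_eq,
      zero_mul, zero_add, mul_one]
    rw [mul_comm (Polynomial.C (C (c i))) (aeval _ p)]

theorem natCast_ne_zero_of_le {F : Type*} [Field F] {n d : ℕ}
    (hchar : ringChar F = 0 ∨ d < ringChar F) {k : ℕ} (hk : k ≠ 0) (hkd : k ≤ d) :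
    (k : MvPolynomial (Fin n) F) ≠ 0 := by
  rw [← map_natCast (C : F →+* MvPolynomial (Fin n) F), Ne, C_eq_zero, ringChar.spec]
  intro h
  rcases hchar with h0 | h1
  · rw [h0, zero_dvd_iff] at h
    exact hk h
  · have := Nat.le_of_dvd (Nat.pos_of_ne_zero hk) h
    omega

theorem shift_eq_self_iff {F : Type*} [Field F] {n : ℕ} (f : MvPolynomial (Fin n) F)
    (hchar : ringChar F = 0 ∨ f.totalDegree < ringChar F) (c : Fin n → F) :
    shift c f = f ↔ dirDeriv c 1 f = 0 := by
  have e0 (p : MvPolynomial (Fin n) F) : (linePoly c p).eval 0 = p := by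
    simpa [shift_zero] using eval_linePoly c p 0
  have e1 : (linePoly c f).eval 1 = shift c f := by simpa using eval_linePoly c f 1
  have hdeg := natDegree_linePoly_le c f
  constructor
  · intro h
    have hk (k : ℕ) : shift (k • c) f = f := by
      induction k with
      | zero => simp [shift_zero]
      | succ k ih => rw [succ_nsmul, ← shift_shift, h, ih]
    have hinj : Function.Injective
        (fun i : Fin (f.totalDegree + 1) => ((i : ℕ) : MvPolynomial (Fin n) F)) := by
      intro i j hij
      by_contra hne
      wlog hlt : i < j generalizing i j
      · exact this hij.symm (Ne.symm hne) (lt_of_le_of_ne (not_lt.mp hlt) (Ne.symm hne))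
      have hlt' : (i : ℕ) < j := hlt
      refine natCast_ne_zero_of_le (n := n) hchar (k := j - i) (by omega) (by omega) ?_
      rw [Nat.cast_sub hlt'.le, sub_eq_zero]
      exact hij.symm
    have hP : linePoly c f - Polynomial.C f = 0 := by
      refine Polynomial.eq_zero_of_natDegree_lt_card_of_eval_eq_zero _ hinj (fun i => ?_) ?_
      · rw [Polynomial.eval_sub, eval_linePoly, hk, Polynomial.eval_C, sub_self]
      · rw [Polynomial.natDegree_sub_C, Fintype.card_fin]
        omega
    rw [← e0 (dirDeriv c 1 f), ← derivative_linePoly, sub_eq_zero.mp hP]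
    simp
  · intro h
    have hder : Polynomial.derivative (linePoly c f) = 0 := by
      rw [derivative_linePoly, h]
      simp [linePoly]
    have hconst : linePoly c f = Polynomial.C ((linePoly c f).coeff 0) := by
      ext1 k
      rcases k with _ | k
      · simp
      rw [Polynomial.coeff_C_succ]
      by_cases hkd : k + 1 ≤ f.totalDegree
      · have hc := congrArg (fun p => Polynomial.coeff p k) hder
        simp only [Polynomial.coeff_derivative, Polynomial.coeff_zero] at hc
        refine (mul_eq_zero.mp hc).resolve_right ?_
        exact_mod_cast natCast_ne_zero_of_le (n := n) hchar (Nat.succ_ne_zero k) hkd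
      · exact Polynomial.coeff_eq_zero_of_natDegree_lt (by omega)
    rw [← e1]
    conv_rhs => rw [← e0 f]
    rw [hconst]
    simp

/-- For `f` of degree `d` (char `0` or `> d`) with `f(x+a) = g(x)`:
`f(x+b) = g(x)` iff `f^{(1)}(a,x) = f^{(1)}(b,x)`. -/
theorem shift_eq_iff_dirDeriv_one_eq
    {F : Type*} [Field F] {n : ℕ} (f g : MvPolynomial (Fin n) F) (d : ℕ)
    (hdeg : f.totalDegree = d) (hchar : ringChar F = 0 ∨ d < ringChar F)
    (a : Fin n → F) (ha : shift a f = g) (b : Fin n → F) :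
    shift b f = g ↔ dirDeriv a 1 f = dirDeriv b 1 f := by
  subst hdeg ha
  rw [eq_comm (a := dirDeriv a 1 f), ← sub_eq_zero (a := dirDeriv b 1 f), ← dirDeriv_one_sub,
    ← shift_eq_self_iff f hchar]
  constructor
  · intro h
    rw [sub_eq_neg_add, ← shift_shift, h, shift_shift, neg_add_cancel, shift_zero]
  · intro h
    conv_rhs => rw [← h]
    rw [shift_shift, add_sub_cancel]
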